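/- For every real constant c with 0 ≤ c < 1, the probability that a random 2-SAT formula on N Boolean variables with ⌊cN⌋ clauses is satisfiable tends to 1 as N → ∞. -/

import Mathlib

open Filter

/-- A random `k`-SAT formula on `N` Boolean variables with `m` clauses: each clause is a
`k`-tuple of literals, a literal being a variable index together with a polarity.  A literal
`(v, b)` is satisfied by an assignment `σ` iff `σ v = b`.  `satProb k N m` is the proportion
of formulas satisfiable by some assignment, i.e. the probability of satisfiability when all
`(2N)^(k·m)` formulas are equally likely. -/
noncomputable def satProb (k N m : ℕ) : ℝ :=
  (Nat.card {F : Fin m → Fin k → Fin N × Bool //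
      ∃ σ : Fin N → Bool, ∀ i : Fin m, ∃ j : Fin k, σ (F i j).1 = (F i j).2} : ℝ) /
  (Nat.card (Fin m → Fin k → Fin N × Bool) : ℝ)

/-! A 2-clause `y ∨ z` is the pair of implications `¬y → z` and `¬z → y`. Order all literals by a
linear extension of reachability and satisfy the later literal of each pair `x`, `¬x`: this
assignment works unless some `x` and `¬x` are strongly connected. In that case a suitable longest
path on distinct variables in the strong component of `x` can be prolonged at both ends, and both
new literals lie over variables of the path: this is a bicycle in the sense of Chvátal and Reed.

A bicycle on `n + 1` variables has `n + 2` edges, which come from different clauses. There are at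
most `(2N) ^ (n + 1) * (2(n + 1))²` of them, and `m` random clauses contain a given one with
probability at most `(m / (2N²)) ^ (n + 2)`. For `m ≤ cN` with `c < 1` the expected number of
bicycles is thus at most `N⁻¹ * ∑ n, 2 (n + 1)² c ^ (n + 2) = O(1 / N)`.
-/

namespace TwoSat

universe u

open Finset Relation

variable {L V : Type*}

section Walks

variable {R : L → L → Prop} {a b : L}

lemma exists_rel_of_reflTransGen {P : L → Prop} (h : ReflTransGen R a b) (ha : P a) (hb : ¬P b) :
    ∃ c d, R c d ∧ P c ∧ ¬P d := by
  by_contra! hP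
  induction h with
  | refl => exact hb ha
  | tail _ hcd ih => exact ih fun hc => hb (hP _ _ hcd hc)

lemma exists_rel_left (h : ReflTransGen R a b) (hne : b ≠ a) : ∃ c, R a c := by
  obtain ⟨_, c, hac, rfl, -⟩ := exists_rel_of_reflTransGen (P := (· = a)) h rfl hne
  exact ⟨c, hac⟩

lemma exists_rel_right (h : ReflTransGen R a b) (hne : a ≠ b) : ∃ c, R c b := by
  obtain ⟨c, d, hcd, -, hd⟩ := exists_rel_of_reflTransGen (P := (· ≠ b)) h hne (by simp)
  exact ⟨c, not_not.1 hd ▸ hcd⟩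

/-- The strongly connected component of `a` in the digraph `R`. -/
def strongComponent (R : L → L → Prop) (a : L) : Set L :=
  {b | ReflTransGen R a b ∧ ReflTransGen R b a}

lemma reflTransGen_strongComponent (x y : strongComponent R a) :
    ReflTransGen (fun x y : strongComponent R a => R x y) x y := by
  obtain ⟨x, hax, hxa⟩ := x
  obtain ⟨y, hay, hya⟩ := y
  have hxy := hxa.trans hay
  induction hxy using ReflTransGen.head_induction_on with
  | refl => exact .refl
  | head hxz hzy ih =>
    exact .head (b := ⟨_, _⟩) hxz (ih (hax.tail hxz) (hzy.trans hya))

/- `f` sends `a` to its strong component, with the components ordered by a linear extension of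
reachability. -/
lemma exists_linearOrder_monotone {L : Type u} (R : L → L → Prop) :
    ∃ (β : Type u) (_ : LinearOrder β) (f : L → β),
      (∀ a b, R a b → f a ≤ f b) ∧ ∀ a b, f a = f b → ReflTransGen R a b := by
  let _ : Preorder L :=
    { le := ReflTransGen R
      le_refl := fun _ => .refl
      le_trans := fun _ _ _ => .trans }
  refine ⟨LinearExtension (Antisymmetrization L (· ≤ ·)), inferInstance,
    fun a => toLinearExtension (toAntisymmetrization (· ≤ ·) a), fun a b hab => ?_,
    fun a b hab => ?_⟩
  · exact toLinearExtension.monotone (toAntisymmetrization_mono (show a ≤ b from .single hab))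
  · exact (Quotient.exact hab).1

end Walks

section Bicycles

/-- A directed path of `R`, possibly empty, whose vertices lie over distinct points under `var`.
For literals, `var` is the underlying variable. -/
structure IsPath (R : L → L → Prop) (var : L → V) (l : List L) : Prop where
  isChain : l.IsChain R
  nodup : (l.map var).Nodup

variable {R : L → L → Prop} {var : L → V} {l l₁ l₂ : List L} {u v : L}

/-- A path with the maximal number of vertices. -/
abbrev IsLongestPath (R : L → L → Prop) (var : L → V) (l : List L) : Prop :=
  MaximalFor (IsPath R var) List.length l

lemma exists_isLongestPath [Finite V] (R : L → L → Prop) (var : L → V) :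
    ∃ l, IsLongestPath R var l := by
  have := Fintype.ofFinite V
  refine Set.Finite.exists_maximalFor' List.length {l | IsPath R var l} ?_ ⟨[], .nil, by simp⟩
  refine (Set.finite_Iic (Fintype.card V)).subset ?_
  rintro _ ⟨l, hl, rfl⟩
  simpa using hl.nodup.length_le_card

lemma IsLongestPath.ne_nil [Nonempty L] (hl : IsLongestPath R var l) : l ≠ [] := by
  rintro rfl
  obtain ⟨a⟩ := ‹Nonempty L›
  simpa using hl.2 (j := [a]) ⟨.singleton a, by simp⟩

lemma IsLongestPath.var_mem_of_cons (hl : IsLongestPath R var l) (hu : (u :: l).IsChain R) :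
    var u ∈ l.map var := by
  by_contra hmem
  simpa using hl.2 ⟨hu, List.nodup_cons.2 ⟨hmem, hl.1.nodup⟩⟩

lemma IsLongestPath.var_mem_of_concat (hl : IsLongestPath R var l) (hv : (l ++ [v]).IsChain R) :
    var v ∈ l.map var := by
  by_contra hmem
  have hpath : IsPath R var (l ++ [v]) :=
    ⟨hv, by simpa [List.nodup_append] using ⟨hl.1.nodup, by simpa using hmem⟩⟩
  simpa using hl.2 hpath

lemma IsPath.rotate (h : IsPath R var (l₁ ++ l₂))
    (hclose : ∀ a ∈ (l₁ ++ l₂).getLast?, ∀ b ∈ (l₁ ++ l₂).head?, R a b) :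
    IsPath R var (l₂ ++ l₁) where
  isChain := h.isChain.right_of_append.append h.isChain.left_of_append fun a ha b hb =>
    hclose a (List.mem_getLast?_append_of_mem_getLast? ha) b
      (List.mem_head?_append_of_mem_head? hb)
  nodup := (List.perm_append_comm.map var).nodup_iff.1 h.nodup

lemma IsLongestPath.rotate (h : IsLongestPath R var (l₁ ++ l₂))
    (hclose : ∀ a ∈ (l₁ ++ l₂).getLast?, ∀ b ∈ (l₁ ++ l₂).head?, R a b) :
    IsLongestPath R var (l₂ ++ l₁) :=
  ⟨h.1.rotate hclose, fun l hl hle => by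
    rw [List.perm_append_comm.length_eq] at hle ⊢
    exact h.2 hl hle⟩

lemma exists_isChain_cons (hR : ∀ a, ∃ b, R b a) (hne : l ≠ []) (hl : l.IsChain R) :
    ∃ u, (u :: l).IsChain R := by
  obtain ⟨a, l, rfl⟩ := List.exists_cons_of_ne_nil hne
  obtain ⟨u, hu⟩ := hR a
  exact ⟨u, .cons_cons hu hl⟩

lemma exists_isChain_concat (hR : ∀ a, ∃ b, R a b) (hne : l ≠ []) (hl : l.IsChain R) :
    ∃ v, (l ++ [v]).IsChain R := by
  obtain ⟨v, hv⟩ := hR (l.getLast hne)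
  refine ⟨v, hl.append (.singleton v) ?_⟩
  simp [List.getLast?_eq_getLast_of_ne_nil hne, hv]

lemma exists_isLongestPath_not_closed [Finite V] [Nonempty L]
    (hconn : ∀ a b, ReflTransGen R a b) (hvar : ∀ a, ∃ b ≠ a, var b = var a) :
    ∃ l u v, IsLongestPath R var l ∧ (u :: l).IsChain R ∧ (l ++ [v]).IsChain R ∧
      ¬(u ∈ l.getLast? ∧ v ∈ l.head?) := by
  have hpred (a : L) : ∃ b, R b a :=
    let ⟨b, hne, _⟩ := hvar a; exists_rel_right (hconn b a) hne
  have hsucc (a : L) : ∃ b, R a b :=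
    let ⟨b, hne, _⟩ := hvar a; exists_rel_left (hconn a b) hne
  obtain ⟨l, hl⟩ := exists_isLongestPath R var
  obtain ⟨u, hu⟩ := exists_isChain_cons hpred hl.ne_nil hl.1.isChain
  obtain ⟨v, hv⟩ := exists_isChain_concat hsucc hl.ne_nil hl.1.isChain
  by_cases hclosed : u ∈ l.getLast? ∧ v ∈ l.head?
  case neg => exact ⟨l, u, v, hl, hu, hv, hclosed⟩
  -- The path closes up to a cycle. Some edge leaves the cycle; rotate it so as to end there.
  obtain ⟨c, d, hcd, hc, hd⟩ : ∃ c d, R c d ∧ c ∈ l ∧ d ∉ l := by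
    obtain ⟨a, ha⟩ := List.exists_mem_of_ne_nil l hl.ne_nil
    obtain ⟨b, hne, hab⟩ := hvar a
    exact exists_rel_of_reflTransGen (hconn a b) ha fun hb =>
      hne (List.inj_on_of_nodup_map hl.1.nodup hb ha hab)
  obtain ⟨l₁, l₂, rfl⟩ : ∃ l₁ l₂, l = (l₁ ++ [c]) ++ l₂ := by
    obtain ⟨l₁, l₂, rfl⟩ := List.append_of_mem hc
    exact ⟨l₁, l₂, List.append_cons ..⟩
  have hrot : IsLongestPath R var (l₂ ++ (l₁ ++ [c])) := hl.rotate fun a ha b hb => by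
    obtain rfl := Option.mem_unique hb hclosed.2
    exact (List.isChain_append.1 hv).2.2 a ha b (by simp)
  have hd' : (l₂ ++ (l₁ ++ [c]) ++ [d]).IsChain R :=
    hrot.1.isChain.append (.singleton d) (by simpa using hcd)
  obtain ⟨u', hu'⟩ := exists_isChain_cons hpred hrot.ne_nil hrot.1.isChain
  refine ⟨_, u', d, hrot, hu', hd', fun h => hd ?_⟩
  exact List.perm_append_comm.subset (List.mem_of_mem_head? h.2)

/-- The `i`-th edge of the walk `u, p 0, …, p (n - 1), v`. -/
def walkEdge {n : ℕ} (u : L) (p : Fin n → L) (v : L) (i : Fin (n + 1)) : L × L :=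
  (Fin.cons (α := fun _ => L) u p i, Fin.snoc (α := fun _ => L) p v i)

/-- The walk `u, p 0, …, p n, v` is a bicycle: a path on distinct variables whose two extra end
vertices lie over variables of the path. The last field says that the end edges `u → p 0` and
`p n → v` differ, which makes all the edges distinct. Being a walk of a given digraph is not part
of the definition. -/
structure IsBicycle (var : L → V) {n : ℕ} (u : L) (p : Fin (n + 1) → L) (v : L) : Prop where
  injective : Function.Injective (var ∘ p)
  left_mem : var u ∈ Set.range (var ∘ p)
  right_mem : var v ∈ Set.range (var ∘ p)
  not_closed : ¬(u = p (Fin.last n) ∧ v = p 0)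

lemma isChain_cons_ofFn_concat {n : ℕ} (u : L) (p : Fin n → L) (v : L) :
    (u :: (List.ofFn p ++ [v])).IsChain R ↔
      ∀ i, R (walkEdge u p v i).1 (walkEdge u p v i).2 := by
  have hcons : u :: List.ofFn p = List.ofFn (Fin.cons (α := fun _ => L) u p) := by simp
  have hsnoc : List.ofFn p ++ [v] = List.ofFn (Fin.snoc (α := fun _ => L) p v) := by
    simp only [List.ofFn_succ', Fin.snoc_castSucc, Fin.snoc_last, List.concat_eq_append]
  rw [List.isChain_cons_iff_forall₂, List.dropLast_concat, hcons, hsnoc]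
  simp only [List.forall₂_iff_get, List.length_ofFn, List.get_ofFn]
  simp [-List.ofFn_succ, walkEdge, Fin.forall_iff]

lemma exists_isBicycle [Finite V] [Nonempty L] (hconn : ∀ a b, ReflTransGen R a b)
    (hvar : ∀ a, ∃ b ≠ a, var b = var a) :
    ∃ (n : ℕ) (u : L) (p : Fin (n + 1) → L) (v : L), IsBicycle var u p v ∧
      ∀ i, R (walkEdge u p v i).1 (walkEdge u p v i).2 := by
  obtain ⟨l, u, v, hl, hu, hv, hclosed⟩ := exists_isLongestPath_not_closed hconn hvar
  obtain ⟨n, hn⟩ := Nat.exists_eq_succ_of_ne_zero (List.length_eq_zero_iff.not.2 hl.ne_nil)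
  obtain ⟨p, rfl⟩ : ∃ p : Fin (n + 1) → L, List.ofFn p = l := by
    rw [show n + 1 = l.length from hn.symm]
    exact ⟨l.get, List.ofFn_get l⟩
  have hmem (a : L) (ha : var a ∈ (List.ofFn p).map var) : var a ∈ Set.range (var ∘ p) := by
    simpa only [List.map_ofFn, List.mem_ofFn, Set.mem_range] using ha
  refine ⟨n, u, p, v, ⟨?_, ?_, ?_, ?_⟩, (isChain_cons_ofFn_concat u p v).1 ?_⟩
  · simpa only [List.map_ofFn, List.nodup_ofFn] using hl.1.nodup
  · exact hmem _ (hl.var_mem_of_cons hu)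
  · exact hmem _ (hl.var_mem_of_concat hv)
  · rintro ⟨rfl, rfl⟩
    refine hclosed ⟨?_, ?_⟩
    · rw [List.getLast?_eq_some_getLast hl.ne_nil, List.getLast_ofFn_succ, Option.mem_some]
    · rw [List.ofFn_succ, List.head?_cons, Option.mem_some]
  · exact List.IsChain.append_overlap (l₁ := [u]) hu hv hl.ne_nil

lemma IsBicycle.map {K : Type*} {f : K → L} (hf : Function.Injective f) {n : ℕ} {u v : K}
    {p : Fin (n + 1) → K} (h : IsBicycle (var ∘ f) u p v) :
    IsBicycle var (f u) (f ∘ p) (f v) where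
  injective := h.injective
  left_mem := h.left_mem
  right_mem := h.right_mem
  not_closed := by simpa [hf.eq_iff] using h.not_closed

lemma IsBicycle.lt_card [Fintype V] {n : ℕ} {p : Fin (n + 1) → L} (h : IsBicycle var u p v) :
    n < Fintype.card V := by
  simpa using Fintype.card_le_of_injective _ h.injective

lemma walkEdge_comp {K : Type*} (f : K → L) {n : ℕ} (u : K) (p : Fin n → K) (v : K)
    (i : Fin (n + 1)) :
    walkEdge (f u) (f ∘ p) (f v) i = Prod.map f f (walkEdge u p v i) := by
  simp only [walkEdge, ← Fin.comp_cons, ← Fin.comp_snoc, Function.comp_apply, Prod.map_apply]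

lemma IsBicycle.walkEdge_injective {n : ℕ} {p : Fin (n + 1) → L} (h : IsBicycle var u p v) :
    Function.Injective (walkEdge u p v) := by
  refine .of_lt_imp_ne fun i j hij heq => ?_
  have hp := h.injective.of_comp
  obtain ⟨a, rfl⟩ := i.exists_castSucc_eq.2 (Fin.ne_last_of_lt hij)
  obtain ⟨b, rfl⟩ := j.exists_succ_eq.2 (Fin.ne_zero_of_lt hij)
  obtain ⟨hsrc, htgt⟩ := Prod.ext_iff.1 heq
  simp only [walkEdge, Fin.cons_succ, Fin.snoc_castSucc] at hsrc htgt
  cases a using Fin.cases with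
  | succ a =>
    obtain rfl := hp hsrc
    exact absurd hij (by simp [Fin.lt_def])
  | zero =>
    cases b using Fin.lastCases with
    | cast b =>
      rw [Fin.succ_castSucc, Fin.snoc_castSucc] at htgt
      exact Fin.succ_ne_zero b (hp htgt).symm
    | last =>
      rw [Fin.succ_last, Fin.snoc_last] at htgt
      exact h.not_closed ⟨hsrc, htgt.symm⟩

end Bicycles

section Literals

/-- The negation of a literal. -/
def negLit (a : V × Bool) : V × Bool := (a.1, !a.2)

@[simp] lemma negLit_negLit (a : V × Bool) : negLit (negLit a) = a := by simp [negLit]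

lemma negLit_ne_self (a : V × Bool) : negLit a ≠ a := by simp [negLit, Prod.ext_iff]

variable [DecidableEq V]

/-- The 2-clauses, as ordered pairs of literals, that are equivalent to the implication
`e.1 → e.2`. -/
def implicationClauses (e : (V × Bool) × (V × Bool)) : Finset (Fin 2 → V × Bool) :=
  {![negLit e.1, e.2], ![e.2, negLit e.1]}

lemma implicationClauses_negLit (a b : V × Bool) :
    implicationClauses (negLit b, negLit a) = implicationClauses (a, b) := by
  simp [implicationClauses, Finset.pair_comm]

lemma eq_or_eq_negLit_of_not_disjoint {a b c d : V × Bool}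
    (h : ¬Disjoint (implicationClauses (a, b)) (implicationClauses (c, d))) :
    (a, b) = (c, d) ∨ (a, b) = (negLit d, negLit c) := by
  have hinj : Function.Injective (negLit (V := V)) :=
    Function.Involutive.injective negLit_negLit
  have heq : negLit a = negLit c ∧ b = d ∨ negLit a = d ∧ b = negLit c := by
    simp only [implicationClauses, Finset.disjoint_insert_left, Finset.disjoint_singleton_left,
      Finset.mem_insert, Finset.mem_singleton, Matrix.vecCons_inj, and_true] at h
    grind
  rcases heq with ⟨hac, rfl⟩ | ⟨rfl, rfl⟩
  · exact .inl (by rw [hinj hac])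
  · exact .inr (by simp)

lemma dens_implicationClauses_le [Fintype V] (e : (V × Bool) × (V × Bool)) :
    (implicationClauses e).dens ≤ 2 / (2 * Fintype.card V : ℚ≥0) ^ 2 := by
  have hcard : Fintype.card (Fin 2 → V × Bool) = (2 * Fintype.card V) ^ 2 := by
    simp [mul_comm]
  rw [Finset.dens, hcard]
  push_cast
  gcongr
  exact_mod_cast Finset.card_le_two

lemma IsBicycle.pairwise_disjoint_implicationClauses {n : ℕ} {u v : V × Bool}
    {p : Fin (n + 1) → V × Bool} (h : IsBicycle Prod.fst u p v) :
    Pairwise fun i j =>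
      Disjoint (implicationClauses (walkEdge u p v i)) (implicationClauses (walkEdge u p v j)) := by
  refine (Std.Symm.pairwise_on (r := Disjoint) _).2 fun i j hij => ?_
  by_contra hdisj
  obtain heq | heq := eq_or_eq_negLit_of_not_disjoint hdisj
  · exact hij.ne (h.walkEdge_injective heq)
  obtain ⟨a, rfl⟩ := i.exists_castSucc_eq.2 (Fin.ne_last_of_lt hij)
  obtain ⟨b, rfl⟩ := j.exists_succ_eq.2 (Fin.ne_zero_of_lt hij)
  have hneg : p a = negLit (p b) := by
    simpa only [walkEdge, Fin.cons_succ, Fin.snoc_castSucc] using congrArg Prod.snd heq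
  obtain rfl : a = b := h.injective (congrArg Prod.fst hneg :)
  exact negLit_ne_self _ hneg.symm

variable {κ : Type*}

/-- The implication digraph of a 2-SAT formula `F`: some clause of `F` says `a → b`. -/
def Implies (F : κ → Fin 2 → V × Bool) (a b : V × Bool) : Prop :=
  ∃ k, F k ∈ implicationClauses (a, b)

/-- Satisfiability of the formula with clauses `F k`, the literal `(x, b)` being true under `σ` when
`σ x = b`. -/
def Satisfiable {ι : Type*} (F : κ → ι → V × Bool) : Prop :=
  ∃ σ : V → Bool, ∀ k, ∃ j, σ (F k j).1 = (F k j).2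

variable {F : κ → Fin 2 → V × Bool}

lemma Implies.contrapositive {a b : V × Bool} (h : Implies F a b) :
    Implies F (negLit b) (negLit a) := by
  simpa only [Implies, implicationClauses_negLit] using h

lemma reflTransGen_implies_contrapositive {a b : V × Bool} (h : ReflTransGen (Implies F) a b) :
    ReflTransGen (Implies F) (negLit b) (negLit a) := by
  induction h with
  | refl => exact .refl
  | tail _ hbc ih => exact ih.head hbc.contrapositive

lemma satisfiable_of_forall_not_reflTransGen
    (h : ∀ a, ReflTransGen (Implies F) a (negLit a) → ¬ReflTransGen (Implies F) (negLit a) a) :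
    Satisfiable F := by
  obtain ⟨β, _, f, hmono, hinj⟩ := exists_linearOrder_monotone (Implies F)
  have hne (a : V × Bool) : f a ≠ f (negLit a) := fun heq => h a (hinj _ _ heq) (hinj _ _ heq.symm)
  let σ (x : V) : Bool := decide (f (x, false) < f (x, true))
  have hσ (a : V × Bool) (ha : f (negLit a) < f a) : σ a.1 = a.2 := by
    obtain ⟨x, _ | _⟩ := a
    · simpa [σ, negLit] using ha.le
    · simpa [σ, negLit] using ha
  refine ⟨σ, fun k => ?_⟩
  obtain hlt | hlt := (hne (F k 0)).lt_or_gt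
  · have himp : Implies F (negLit (F k 0)) (F k 1) := by
      refine ⟨k, Finset.mem_insert.2 (.inl (funext (Fin.forall_fin_two.2 ⟨?_, rfl⟩)))⟩
      simp
    refine ⟨1, hσ _ ?_⟩
    calc f (negLit (F k 1)) ≤ f (F k 0) := by simpa using hmono _ _ himp.contrapositive
      _ < f (negLit (F k 0)) := hlt
      _ ≤ f (F k 1) := hmono _ _ himp
  · exact ⟨0, hσ _ hlt⟩

lemma exists_isBicycle_of_not_satisfiable [Finite V] (hF : ¬Satisfiable F) :
    ∃ (n : ℕ) (u : V × Bool) (p : Fin (n + 1) → V × Bool) (v : V × Bool),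
      IsBicycle Prod.fst u p v ∧ ∀ i, Implies F (walkEdge u p v i).1 (walkEdge u p v i).2 := by
  obtain ⟨x, hx, hx'⟩ : ∃ x, ReflTransGen (Implies F) x (negLit x) ∧
      ReflTransGen (Implies F) (negLit x) x := by
    by_contra! h
    exact hF (satisfiable_of_forall_not_reflTransGen h)
  have hneg (y : V × Bool) (hy : y ∈ strongComponent (Implies F) x) :
      negLit y ∈ strongComponent (Implies F) x :=
    ⟨hx.trans (reflTransGen_implies_contrapositive hy.2),
      (reflTransGen_implies_contrapositive hy.1).trans hx'⟩
  have : Nonempty (strongComponent (Implies F) x) := ⟨x, .refl, .refl⟩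
  obtain ⟨n, u, p, v, hbic, hedge⟩ := exists_isBicycle
    (var := Prod.fst ∘ ((↑) : strongComponent (Implies F) x → V × Bool))
    (reflTransGen_strongComponent (R := Implies F))
    fun y => ⟨⟨negLit y, hneg y y.2⟩, fun h => negLit_ne_self _ (congrArg Subtype.val h), rfl⟩
  refine ⟨n, u, (↑) ∘ p, v, hbic.map Subtype.val_injective, fun i => ?_⟩
  rw [walkEdge_comp]
  exact hedge i

end Literals

section Counting

variable {α ι κ : Type*} [Fintype κ] [DecidableEq κ]

lemma dens_forall_mem [Fintype α] [Nonempty α] [DecidableEq α] [Fintype ι] {e : ι → κ}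
    (he : Function.Injective e) (A : ι → Finset α) :
    ({F | ∀ i, F (e i) ∈ A i} : Finset (κ → α)).dens = ∏ i, (A i).dens := by
  classical
  let B (k : κ) : Finset α := {x | ∀ i, e i = k → x ∈ A i}
  have hB : ({F | ∀ i, F (e i) ∈ A i} : Finset (κ → α)) = Fintype.piFinset B := by
    ext F
    simp only [B, Fintype.mem_piFinset, mem_filter_univ, forall_comm (α := κ), forall_eq']
  have hdens : (Fintype.piFinset B).dens = ∏ k, (B k).dens := by
    simp [dens, Fintype.card_piFinset, Finset.prod_div_distrib]
  rw [hB, hdens]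
  refine (Fintype.prod_of_injective e he _ _ (fun k hk => ?_) fun i => ?_).symm
  · have hBk : B k = univ :=
      filter_true_of_mem fun x _ i hi => absurd ⟨i, hi⟩ hk
    rw [hBk, dens_univ]
  · simp [B, he.eq_iff]

/- Disjoint sets are hit at distinct indices, so this is the union bound over `ι ↪ κ`. -/
lemma dens_forall_exists_mem_le [Fintype α] [Nonempty α] [Fintype ι] {A : ι → Finset α}
    [DecidablePred fun F : κ → α => ∀ i, ∃ k, F k ∈ A i]
    (hA : Pairwise fun i j => Disjoint (A i) (A j)) :
    ({F | ∀ i, ∃ k, F k ∈ A i} : Finset (κ → α)).dens ≤ ∏ i, (Fintype.card κ * (A i).dens) := by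
  classical
  have hsub : ({F | ∀ i, ∃ k, F k ∈ A i} : Finset (κ → α)) ⊆
      univ.biUnion fun e : ι ↪ κ => {F | ∀ i, F (e i) ∈ A i} := by
    intro F hF
    simp only [mem_filter_univ, mem_biUnion, mem_univ, true_and] at hF ⊢
    choose e he using hF
    refine ⟨⟨e, fun i j hij => ?_⟩, he⟩
    by_contra hne
    exact Finset.disjoint_left.1 (hA hne) (he i) (hij ▸ he j)
  calc _ ≤ ∑ e : ι ↪ κ, ({F | ∀ i, F (e i) ∈ A i} : Finset (κ → α)).dens :=
        (dens_le_dens hsub).trans dens_biUnion_le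
    _ = Fintype.card (ι ↪ κ) * ∏ i, (A i).dens := by
        simp [dens_forall_mem (Function.Embedding.injective _)]
    _ ≤ Fintype.card κ ^ Fintype.card ι * ∏ i, (A i).dens := by
        gcongr
        rw [Fintype.card_embedding_eq]
        exact_mod_cast Nat.descFactorial_le_pow _ _
    _ = ∏ i, (Fintype.card κ * (A i).dens) := by
        simp [Finset.prod_mul_distrib]

variable [Fintype V]

open Classical in
/-- All bicycles `(u, p, v)` on `n + 1` distinct variables from `V`, which are the candidates for a
bicycle in the implication digraph of a random formula. -/
noncomputable def bicycles (V : Type*) [Fintype V] (n : ℕ) :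
    Finset ((V × Bool) × (Fin (n + 1) → V × Bool) × (V × Bool)) :=
  {b | IsBicycle Prod.fst b.1 b.2.1 b.2.2}

lemma mem_bicycles {n : ℕ} {u v : V × Bool} {p : Fin (n + 1) → V × Bool} :
    (u, p, v) ∈ bicycles V n ↔ IsBicycle Prod.fst u p v := by
  simp [bicycles]

lemma card_bicycles_le (n : ℕ) :
    #(bicycles V n) ≤ (2 * Fintype.card V) ^ (n + 1) * (2 * (n + 1)) ^ 2 := by
  classical
  let f (x : (Fin (n + 1) → V × Bool) × (Fin (n + 1) × Bool) × (Fin (n + 1) × Bool)) :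
      (V × Bool) × (Fin (n + 1) → V × Bool) × (V × Bool) :=
    (((x.1 x.2.1.1).1, x.2.1.2), x.1, ((x.1 x.2.2.1).1, x.2.2.2))
  have hsub : bicycles V n ⊆ univ.image f := by
    rintro ⟨⟨u, b⟩, p, ⟨v, c⟩⟩ hb
    have hbic := mem_bicycles.1 hb
    obtain ⟨i, rfl : (p i).1 = u⟩ := hbic.left_mem
    obtain ⟨j, rfl : (p j).1 = v⟩ := hbic.right_mem
    exact mem_image.2 ⟨(p, (i, b), (j, c)), mem_univ _, rfl⟩
  calc #(bicycles V n) ≤ #(univ.image f) := card_le_card hsub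
    _ ≤ _ := card_image_le
    _ = (2 * Fintype.card V) ^ (n + 1) * (2 * (n + 1)) ^ 2 := by
        simp only [card_univ, Fintype.card_prod, Fintype.card_fun, Fintype.card_fin,
          Fintype.card_bool]
        ring

variable [Nonempty V]

lemma IsBicycle.dens_forall_implies_le [DecidableEq V] {n : ℕ} {u v : V × Bool}
    {p : Fin (n + 1) → V × Bool} (h : IsBicycle Prod.fst u p v) :
    ({F | ∀ i, ∃ k, F k ∈ implicationClauses (walkEdge u p v i)} :
      Finset (κ → Fin 2 → V × Bool)).dens ≤
      (Fintype.card κ * (2 / (2 * Fintype.card V) ^ 2)) ^ (n + 2) := by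
  refine (dens_forall_exists_mem_le h.pairwise_disjoint_implicationClauses).trans ?_
  have hterm (e : (V × Bool) × (V × Bool)) :
      Fintype.card κ * (implicationClauses e).dens ≤
        Fintype.card κ * (2 / (2 * Fintype.card V) ^ 2) := by
    gcongr
    exact dens_implicationClauses_le e
  simpa using prod_le_pow_card univ _ _ fun i _ => hterm (walkEdge u p v i)

lemma card_bicycles_mul_pow_le (n : ℕ) (x : ℚ≥0) :
    #(bicycles V n) * (x * (2 / (2 * Fintype.card V) ^ 2)) ^ (n + 2) ≤
      2 * (n + 1) ^ 2 * (x / Fintype.card V) ^ (n + 2) / Fintype.card V := by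
  have hV : (Fintype.card V : ℚ≥0) ≠ 0 := by simp
  calc #(bicycles V n) * (x * (2 / (2 * Fintype.card V) ^ 2)) ^ (n + 2)
    _ ≤ (2 * Fintype.card V) ^ (n + 1) * (2 * (n + 1)) ^ 2 *
        (x * (2 / (2 * Fintype.card V) ^ 2)) ^ (n + 2) := by
        gcongr
        exact_mod_cast card_bicycles_le n
    _ = 2 * (n + 1) ^ 2 * (x / Fintype.card V) ^ (n + 2) / Fintype.card V := by
        have hx : x * (2 / (2 * Fintype.card V) ^ 2) =
            x / Fintype.card V / (2 * Fintype.card V) := by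
          field_simp
        rw [hx]
        simp only [div_pow, mul_pow, pow_succ]
        field_simp

open Classical in
lemma dens_not_satisfiable_le :
    ({F | ¬Satisfiable F} : Finset (κ → Fin 2 → V × Bool)).dens ≤
      (∑ n ∈ range (Fintype.card V),
        2 * (n + 1) ^ 2 * (Fintype.card κ / Fintype.card V : ℚ≥0) ^ (n + 2)) / Fintype.card V := by
  let containing {n : ℕ} (b : (V × Bool) × (Fin (n + 1) → V × Bool) × (V × Bool)) :
      Finset (κ → Fin 2 → V × Bool) :=
    {F | ∀ i, ∃ k, F k ∈ implicationClauses (walkEdge b.1 b.2.1 b.2.2 i)}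
  have hsub : ({F | ¬Satisfiable F} : Finset (κ → Fin 2 → V × Bool)) ⊆
      (range (Fintype.card V)).biUnion fun n => (bicycles V n).biUnion containing := by
    intro F hF
    obtain ⟨n, u, p, v, hbic, hedge⟩ :=
      exists_isBicycle_of_not_satisfiable ((mem_filter_univ F).1 hF)
    exact mem_biUnion.2 ⟨n, mem_range.2 hbic.lt_card, mem_biUnion.2
      ⟨(u, p, v), mem_bicycles.2 hbic, (mem_filter_univ _).2 hedge⟩⟩
  calc _ ≤ ∑ n ∈ range (Fintype.card V), ∑ b ∈ bicycles V n, (containing b).dens :=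
        (dens_le_dens hsub).trans (dens_biUnion_le.trans (sum_le_sum fun _ _ => dens_biUnion_le))
    _ ≤ ∑ n ∈ range (Fintype.card V),
        #(bicycles V n) * (Fintype.card κ * (2 / (2 * Fintype.card V) ^ 2) : ℚ≥0) ^ (n + 2) := by
        refine sum_le_sum fun n _ => ?_
        rw [← nsmul_eq_mul]
        exact sum_le_card_nsmul _ _ _ fun b hb => (mem_bicycles.1 hb).dens_forall_implies_le
    _ ≤ ∑ n ∈ range (Fintype.card V),
        2 * (n + 1) ^ 2 * (Fintype.card κ / Fintype.card V : ℚ≥0) ^ (n + 2) / Fintype.card V :=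
        sum_le_sum fun n _ => card_bicycles_mul_pow_le n _
    _ = _ := (sum_div _ _ _).symm

end Counting

section Probability

lemma satProb_eq_dens (k N m : ℕ)
    [DecidablePred (Satisfiable : (Fin m → Fin k → Fin N × Bool) → Prop)] :
    satProb k N m = (({F | Satisfiable F} : Finset (Fin m → Fin k → Fin N × Bool)).dens : ℝ) := by
  rw [nnratCast_dens, ← Fintype.card_subtype, ← Nat.card_eq_fintype_card,
    ← Nat.card_eq_fintype_card, satProb]
  rfl

lemma satProb_le_one (k N m : ℕ) : satProb k N m ≤ 1 := by
  classical
  rw [satProb_eq_dens]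
  exact_mod_cast dens_le_one

lemma one_sub_le_satProb_two {N : ℕ} (hN : N ≠ 0) (m : ℕ) :
    1 - (∑ n ∈ range N, 2 * (n + 1) ^ 2 * (m / N : ℝ) ^ (n + 2)) / N ≤ satProb 2 N m := by
  classical
  have := NeZero.mk hN
  have hsat : (({F | Satisfiable F} : Finset (Fin m → Fin 2 → Fin N × Bool)).dens : ℝ) +
      (({F | ¬Satisfiable F} : Finset (Fin m → Fin 2 → Fin N × Bool)).dens : ℝ) = 1 := by
    have h := dens_filter_add_dens_filter_not_eq_dens (s := univ)
      (p := (Satisfiable : (Fin m → Fin 2 → Fin N × Bool) → Prop))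
    exact_mod_cast h.trans dens_univ
  have hunsat : (({F | ¬Satisfiable F} : Finset (Fin m → Fin 2 → Fin N × Bool)).dens : ℝ) ≤
      (∑ n ∈ range N, 2 * (n + 1) ^ 2 * (m / N : ℝ) ^ (n + 2)) / N := by
    have h := (NNRat.cast_le (K := ℝ)).2 (dens_not_satisfiable_le (V := Fin N) (κ := Fin m))
    simpa [NNRat.cast_sum] using h
  rw [satProb_eq_dens]
  linarith

lemma summable_two_mul_succ_sq_mul_pow {c : ℝ} (hc : ‖c‖ < 1) :
    Summable fun n : ℕ => 2 * (n + 1 : ℝ) ^ 2 * c ^ (n + 2) := by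
  have h := (summable_nat_add_iff 1).2 (summable_pow_mul_geometric_of_norm_lt_one (R := ℝ) 2 hc)
  refine (h.mul_left (2 * c)).congr fun n => ?_
  push_cast
  ring

lemma one_sub_tsum_div_le_satProb_two {c : ℝ} (hc0 : 0 ≤ c) (hc1 : c < 1) {N m : ℕ} (hN : N ≠ 0)
    (hm : m ≤ c * N) :
    1 - (∑' n : ℕ, 2 * (n + 1 : ℝ) ^ 2 * c ^ (n + 2)) / N ≤ satProb 2 N m := by
  refine le_trans ?_ (one_sub_le_satProb_two hN m)
  gcongr
  have hc : ‖c‖ < 1 := by rwa [Real.norm_of_nonneg hc0]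
  have hratio : (m / N : ℝ) ≤ c := div_le_of_le_mul₀ (by positivity) hc0 hm
  calc ∑ n ∈ range N, 2 * (n + 1 : ℝ) ^ 2 * (m / N : ℝ) ^ (n + 2)
    _ ≤ ∑ n ∈ range N, 2 * (n + 1 : ℝ) ^ 2 * c ^ (n + 2) := by gcongr
    _ ≤ ∑' n : ℕ, 2 * (n + 1 : ℝ) ^ 2 * c ^ (n + 2) :=
        (summable_two_mul_succ_sq_mul_pow hc).sum_le_tsum _ fun n _ => by positivity

end Probability

end TwoSat

/-- For every `0 ≤ c < 1`, a random 2-SAT formula with `⌊cN⌋` clauses on `N` variables is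
satisfiable with probability tending to `1` as `N → ∞`. -/
theorem stmt_9 (c : ℝ) (hc0 : 0 ≤ c) (hc1 : c < 1) :
    Tendsto (fun N : ℕ => satProb 2 N ⌊c * (N : ℝ)⌋₊) atTop (nhds 1) := by
  have hlower : Tendsto (fun N : ℕ => 1 - (∑' n : ℕ, 2 * (n + 1 : ℝ) ^ 2 * c ^ (n + 2)) / (N : ℝ))
      atTop (nhds 1) := by
    simpa using (tendsto_const_div_atTop_nhds_zero_nat (𝕜 := ℝ) _).const_sub 1
  refine tendsto_of_tendsto_of_tendsto_of_le_of_le' hlower tendsto_const_nhds ?_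
    (.of_forall fun N => TwoSat.satProb_le_one 2 N _)
  filter_upwards [eventually_ne_atTop 0] with N hN
  exact TwoSat.one_sub_tsum_div_le_satProb_two hc0 hc1 hN (Nat.floor_le (by positivity))
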